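/- arXiv:2002.02829 — 4 statements merged into one kernel-verified Lean document; each statement's English description precedes it below -/
import Mathlib

section
/- (The Boltzmann policy satisfies the improvement condition.) Assume α > 0. Fix a function Q : S → A → ℝ and define the policy π' by π' s a = exp (Q s a / α) / ∑_{a'} exp (Q s a' / α). Then for every state s and every policy π, ∑_a π' s a · (α · log (π' s a) − Q s a) ≤ ∑_a π s a · (α · log (π s a) − Q s a). -/
open Real

/-!
Write `Z = ∑ exp (Q s a / α)` for the partition function. Since `α log (π' s a) - Q s a = -α log Z`
for every action, the left side equals `-α log Z`, while the right side exceeds it by `α` times the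
relative entropy of `π` with respect to `π'`. Nonnegativity of the relative entropy follows by
summing the pointwise bound `gibbs_pointwise`, as both policies have total mass one.
-/

/-- The pointwise form of Gibbs' inequality; `p = 0` is allowed. -/
lemma gibbs_pointwise {p q : ℝ} (hp : 0 ≤ p) (hq : 0 < q) :
    p - q ≤ p * (Real.log p - Real.log q) := by
  rcases hp.eq_or_lt with rfl | hp
  · simpa using hq.le
  · have h := Real.log_le_sub_one_of_pos (div_pos hq hp)
    rw [Real.log_div hq.ne' hp.ne'] at h
    have h2 := mul_le_mul_of_nonneg_left h hp.le
    have h3 : p * (q / p - 1) = q - p := by field_simp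
    linarith

/-- The Boltzmann policy `π' s a = exp (Q s a / α) / ∑ exp (Q s a' / α)` satisfies the
soft policy improvement condition against any policy `π`. -/
theorem boltzmann_policy_improvement_condition
    {S A : Type*} [Fintype S] [Fintype A] [Nonempty S] [Nonempty A]
    (α : ℝ) (hα : 0 < α) (Q : S → A → ℝ)
    (pol' : S → A → ℝ)
    (hpol' : ∀ s a, pol' s a = Real.exp (Q s a / α) / ∑ a', Real.exp (Q s a' / α))
    (pol : S → A → ℝ) (hpol0 : ∀ s a, 0 ≤ pol s a)
    (hpol1 : ∀ s, ∑ a, pol s a = 1) :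
    ∀ s, ∑ a, pol' s a * (α * Real.log (pol' s a) - Q s a)
        ≤ ∑ a, pol s a * (α * Real.log (pol s a) - Q s a) := by
  intro s
  set Z := ∑ a', Real.exp (Q s a' / α) with hZ
  have hZpos : 0 < Z := Finset.sum_pos (fun a _ => Real.exp_pos _) Finset.univ_nonempty
  have hpos : ∀ a, 0 < pol' s a := fun a => by
    rw [hpol']
    exact div_pos (Real.exp_pos _) hZpos
  have hsum : ∑ a, pol' s a = 1 := by
    simp_rw [hpol', ← Finset.sum_div]
    exact div_self hZpos.ne'
  have hlog : ∀ a, α * Real.log (pol' s a) - Q s a = -(α * Real.log Z) := fun a => by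
    rw [hpol', ← hZ, Real.log_div (Real.exp_pos _).ne' hZpos.ne', Real.log_exp]
    field_simp
    ring
  calc ∑ a, pol' s a * (α * Real.log (pol' s a) - Q s a)
      = -(α * Real.log Z) := by
        simp_rw [hlog, ← Finset.sum_mul, hsum, one_mul]
    _ = ∑ a, (pol s a * -(α * Real.log Z) + α * (pol s a - pol' s a)) := by
        rw [Finset.sum_add_distrib, ← Finset.sum_mul, ← Finset.mul_sum,
          Finset.sum_sub_distrib, hpol1, hsum]
        ring
    _ ≤ ∑ a, pol s a * (α * Real.log (pol s a) - Q s a) := by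
        refine Finset.sum_le_sum fun a _ => ?_
        have h := mul_le_mul_of_nonneg_left (gibbs_pointwise (hpol0 s a) (hpos a)) hα.le
        rw [← hlog a]
        linarith
end

section
/- (Soft Policy Improvement, Lemma 2.) Let π and π' be policies and suppose that for every state s, ∑_a π' s a · (α · log (π' s a) − Q^π s a) ≤ ∑_a π s a · (α · log (π s a) − Q^π s a). Then Q^{π'} s a ≥ Q^π s a for all states s and actions a. -/
/-!
The proof is a maximum principle. Let `M` be the largest value of `Q^π - Q^{π'}`. In each state,
the improvement hypothesis says that replacing `π` by `π'` does not decrease the soft value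
computed from `Q^π`, and replacing `Q^π` by `Q^{π'}` then costs at most `M` because `π'` is a
probability vector. Averaging over `P` and using both fixed-point equations at a maximizing
pair gives `M ≤ γ M`, so `M ≤ 0` since `γ < 1`.
-/

open Real Filter Topology

/-- The soft Bellman operator `T^π` of a policy `pol`, given transition kernel `P`,
reward `R`, discount `γ` and entropy temperature `α`. -/
noncomputable def softBellman {S A : Type*} [Fintype S] [Fintype A]
    (P : S → A → S → ℝ) (R : S → A → ℝ) (γ α : ℝ) (pol : S → A → ℝ)
    (Q : S → A → ℝ) : S → A → ℝ :=
  fun s a => R s a +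
    γ * ∑ s', P s a s' * (∑ a', pol s' a' * (Q s' a' - α * Real.log (pol s' a')))

/-- Soft Policy Improvement (Lemma 2): if `π'` improves on `π` with respect to `Q^π`,
then `Q^{π'} ≥ Q^π` everywhere. -/
theorem soft_policy_improvement
    {S A : Type*} [Fintype S] [Fintype A] [Nonempty S] [Nonempty A]
    (P : S → A → S → ℝ) (hP0 : ∀ s a s', 0 ≤ P s a s')
    (hP1 : ∀ s a, ∑ s', P s a s' = 1)
    (R : S → A → ℝ) (γ : ℝ) (hγ0 : 0 ≤ γ) (hγ1 : γ < 1) (α : ℝ) (hα : 0 ≤ α)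
    (pol : S → A → ℝ) (hpol0 : ∀ s a, 0 ≤ pol s a)
    (hpol1 : ∀ s, ∑ a, pol s a = 1)
    (pol' : S → A → ℝ) (hpol'0 : ∀ s a, 0 ≤ pol' s a)
    (hpol'1 : ∀ s, ∑ a, pol' s a = 1)
    (Qpi : S → A → ℝ) (hfix : softBellman P R γ α pol Qpi = Qpi)
    (Qpi' : S → A → ℝ) (hfix' : softBellman P R γ α pol' Qpi' = Qpi')
    (himp : ∀ s, ∑ a, pol' s a * (α * Real.log (pol' s a) - Qpi s a)
        ≤ ∑ a, pol s a * (α * Real.log (pol s a) - Qpi s a)) :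
    ∀ s a, Qpi s a ≤ Qpi' s a := by
  -- `(s₀, a₀)` maximizes the gap `Qpi - Qpi'`.
  obtain ⟨⟨s₀, a₀⟩, hmax⟩ := Finite.exists_max (fun p : S × A => Qpi p.1 p.2 - Qpi' p.1 p.2)
  set M := Qpi s₀ a₀ - Qpi' s₀ a₀ with hM
  have hgap : ∀ s a, Qpi s a ≤ Qpi' s a + M := fun s a => by
    have := hmax (s, a)
    simp only at this
    linarith
  have hval : ∀ s, ∑ a, pol s a * (Qpi s a - α * Real.log (pol s a))
      ≤ ∑ a, pol' s a * (Qpi' s a - α * Real.log (pol' s a)) + M := fun s => by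
    have hneg : ∀ q : S → A → ℝ, ∑ a, q s a * (Qpi s a - α * Real.log (q s a))
        = -∑ a, q s a * (α * Real.log (q s a) - Qpi s a) := fun q => by
      rw [← Finset.sum_neg_distrib]
      exact Finset.sum_congr rfl fun a _ => by ring
    calc ∑ a, pol s a * (Qpi s a - α * Real.log (pol s a))
        ≤ ∑ a, pol' s a * (Qpi s a - α * Real.log (pol' s a)) := by
          rw [hneg pol, hneg pol']
          exact neg_le_neg (himp s)
      _ ≤ ∑ a, (pol' s a * (Qpi' s a - α * Real.log (pol' s a)) + pol' s a * M) :=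
          Finset.sum_le_sum fun a _ => by
            nlinarith [mul_le_mul_of_nonneg_left (hgap s a) (hpol'0 s a)]
      _ = ∑ a, pol' s a * (Qpi' s a - α * Real.log (pol' s a)) + M := by
          rw [Finset.sum_add_distrib, ← Finset.sum_mul, hpol'1, one_mul]
  have hstep : ∑ s, P s₀ a₀ s * (∑ a, pol s a * (Qpi s a - α * Real.log (pol s a)))
      ≤ ∑ s, P s₀ a₀ s * (∑ a, pol' s a * (Qpi' s a - α * Real.log (pol' s a))) + M :=
    calc _ ≤ ∑ s, P s₀ a₀ s *
          (∑ a, pol' s a * (Qpi' s a - α * Real.log (pol' s a)) + M) :=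
          Finset.sum_le_sum fun s _ => mul_le_mul_of_nonneg_left (hval s) (hP0 s₀ a₀ s)
      _ = _ := by
          simp only [mul_add]
          rw [Finset.sum_add_distrib, ← Finset.sum_mul, hP1, one_mul]
  have hcontr : M ≤ γ * M := by
    have h := congrFun (congrFun hfix s₀) a₀
    have h' := congrFun (congrFun hfix' s₀) a₀
    simp only [softBellman] at h h'
    have := mul_le_mul_of_nonneg_left hstep hγ0
    rw [mul_add] at this
    linarith
  have hM0 : M ≤ 0 := by nlinarith
  intro s a
  linarith [hgap s a]
end

section
/- (One step of soft policy iteration improves the soft Q-function.) Assume α > 0. Let π be a policy and define the policy π' by π' s a = exp (Q^π s a / α)) / ∑_{a'} exp (Q^π s a' / α). Then Q^{π'} s a ≥ Q^π s a for all states s and actions a. -/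
/-!
By the Gibbs variational principle, for fixed `q : A → ℝ` the entropy-regularised value
`∑ a, p a * (q a - α * log (p a))` of a probability vector `p` is at most
`α * log (∑ a, exp (q a / α))` (`gibbs_le`), and the softmax vector attains this bound
(`softmax_value`). Hence `Q^π = T^π Q^π ≤ T^{π'} Q^π`. Subtracting this from
`Q^{π'} = T^{π'} Q^{π'}`, the difference `D = Q^{π'} - Q^π` satisfies
`D s a ≥ γ * ∑ s', P s a s' * ∑ a', π' s' a' * D s' a'`. At a minimiser of `D` over the finite
set `S × A` this gives `min D ≥ γ * min D`, so `min D ≥ 0` because `γ < 1`.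
-/

open Real Filter Topology

/-- Gibbs variational inequality. -/
lemma gibbs_le {A : Type*} [Fintype A] [Nonempty A] {α : ℝ} (hα : 0 < α) (p q : A → ℝ)
    (hp0 : ∀ a, 0 ≤ p a) (hp1 : ∑ a, p a = 1) :
    ∑ a, p a * (q a - α * Real.log (p a)) ≤ α * Real.log (∑ a, Real.exp (q a / α)) := by
  set Z := ∑ a, Real.exp (q a / α) with hZ
  have hZpos : 0 < Z := Finset.sum_pos (fun a _ => Real.exp_pos _) Finset.univ_nonempty
  -- `log x ≤ x - 1` at `x = exp (q a / α) / (p a * Z)`; the correction terms sum to zero.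
  have key : ∀ a, p a * (q a - α * Real.log (p a)) ≤
      p a * (α * Real.log Z) + α * (Real.exp (q a / α) / Z - p a) := by
    intro a
    rcases (hp0 a).eq_or_lt with h | h
    · rw [← h]
      have : 0 ≤ α * (Real.exp (q a / α) / Z) := by positivity
      simpa using this
    · have hlog := Real.log_le_sub_one_of_pos
        (show 0 < Real.exp (q a / α) / (p a * Z) by positivity)
      rw [Real.log_div (Real.exp_pos _).ne' (by positivity), Real.log_exp,
        Real.log_mul h.ne' hZpos.ne'] at hlog
      have h2 := mul_le_mul_of_nonneg_left hlog (mul_pos hα h).le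
      have e1 : α * p a * (q a / α - (Real.log (p a) + Real.log Z)) =
          p a * (q a - α * Real.log (p a)) - p a * (α * Real.log Z) := by
        field_simp
        ring
      have e2 : α * p a * (Real.exp (q a / α) / (p a * Z) - 1) =
          α * (Real.exp (q a / α) / Z - p a) := by
        field_simp
      linarith
  refine (Finset.sum_le_sum fun a _ => key a).trans (le_of_eq ?_)
  rw [Finset.sum_add_distrib, ← Finset.sum_mul, ← Finset.mul_sum, Finset.sum_sub_distrib,
    ← Finset.sum_div, hp1, ← hZ, div_self hZpos.ne']
  ring

lemma softmax_sum {A : Type*} [Fintype A] [Nonempty A] (α : ℝ) (p q : A → ℝ)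
    (hp : ∀ a, p a = Real.exp (q a / α) / ∑ a', Real.exp (q a' / α)) : ∑ a, p a = 1 := by
  have hZpos : 0 < ∑ a, Real.exp (q a / α) :=
    Finset.sum_pos (fun a _ => Real.exp_pos _) Finset.univ_nonempty
  simp_rw [hp]
  rw [← Finset.sum_div, div_self hZpos.ne']

/-- The softmax vector attains the bound of `gibbs_le`. -/
lemma softmax_value {A : Type*} [Fintype A] [Nonempty A] {α : ℝ} (hα : 0 < α) (p q : A → ℝ)
    (hp : ∀ a, p a = Real.exp (q a / α) / ∑ a', Real.exp (q a' / α)) :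
    ∑ a, p a * (q a - α * Real.log (p a)) = α * Real.log (∑ a, Real.exp (q a / α)) := by
  have hZpos : 0 < ∑ a, Real.exp (q a / α) :=
    Finset.sum_pos (fun a _ => Real.exp_pos _) Finset.univ_nonempty
  have key : ∀ a, q a - α * Real.log (p a) = α * Real.log (∑ a, Real.exp (q a / α)) := by
    intro a
    rw [hp, Real.log_div (Real.exp_pos _).ne' hZpos.ne', Real.log_exp]
    field_simp
    ring
  simp_rw [key]
  rw [← Finset.sum_mul, softmax_sum α p q hp, one_mul]

/-- One step of soft policy iteration improves the soft Q-function: with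
`π' s a = exp (Q^π s a / α) / ∑ exp (Q^π s a' / α)`, we have `Q^{π'} ≥ Q^π`. -/
theorem soft_policy_iteration_step_improves
    {S A : Type*} [Fintype S] [Fintype A] [Nonempty S] [Nonempty A]
    (P : S → A → S → ℝ) (hP0 : ∀ s a s', 0 ≤ P s a s')
    (hP1 : ∀ s a, ∑ s', P s a s' = 1)
    (R : S → A → ℝ) (γ : ℝ) (hγ0 : 0 ≤ γ) (hγ1 : γ < 1) (α : ℝ) (hα : 0 < α)
    (pol : S → A → ℝ) (hpol0 : ∀ s a, 0 ≤ pol s a)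
    (hpol1 : ∀ s, ∑ a, pol s a = 1)
    (Qpi : S → A → ℝ) (hfix : softBellman P R γ α pol Qpi = Qpi)
    (pol' : S → A → ℝ)
    (hpol' : ∀ s a, pol' s a = Real.exp (Qpi s a / α) / ∑ a', Real.exp (Qpi s a' / α))
    (Qpi' : S → A → ℝ) (hfix' : softBellman P R γ α pol' Qpi' = Qpi') :
    ∀ s a, Qpi s a ≤ Qpi' s a := by
  have hnonneg : ∀ s a, 0 ≤ pol' s a := by
    intro s a
    rw [hpol']
    positivity
  have hsum : ∀ s, ∑ a, pol' s a = 1 := fun s => softmax_sum α _ (Qpi s) (hpol' s)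
  have himp : ∀ s a, Qpi s a ≤ softBellman P R γ α pol' Qpi s a := by
    intro s a
    conv_lhs => rw [← hfix]
    unfold softBellman
    refine add_le_add_right (mul_le_mul_of_nonneg_left (Finset.sum_le_sum fun s' _ =>
      mul_le_mul_of_nonneg_left ?_ (hP0 s a s')) hγ0) _
    rw [softmax_value hα (pol' s') (Qpi s') (hpol' s')]
    exact gibbs_le hα _ _ (hpol0 s') (hpol1 s')
  obtain ⟨⟨s₀, a₀⟩, hmin⟩ := Finite.exists_min (fun x : S × A => Qpi' x.1 x.2 - Qpi x.1 x.2)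
  set m := Qpi' s₀ a₀ - Qpi s₀ a₀ with hm
  have hmin' : ∀ s a, m ≤ Qpi' s a - Qpi s a := fun s a => hmin (s, a)
  have hV : ∀ s', m + ∑ a', pol' s' a' * (Qpi s' a' - α * Real.log (pol' s' a')) ≤
      ∑ a', pol' s' a' * (Qpi' s' a' - α * Real.log (pol' s' a')) := by
    intro s'
    calc m + ∑ a', pol' s' a' * (Qpi s' a' - α * Real.log (pol' s' a'))
        = ∑ a', pol' s' a' * (m + (Qpi s' a' - α * Real.log (pol' s' a'))) := by
          simp_rw [mul_add]
          rw [Finset.sum_add_distrib, ← Finset.sum_mul, hsum, one_mul]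
      _ ≤ _ := by
          refine Finset.sum_le_sum fun a' _ => mul_le_mul_of_nonneg_left ?_ (hnonneg s' a')
          linarith [hmin' s' a']
  have hstep : softBellman P R γ α pol' Qpi s₀ a₀ + γ * m ≤ Qpi' s₀ a₀ := by
    conv_rhs => rw [← hfix']
    unfold softBellman
    have h1 := Finset.sum_le_sum fun s' (_ : s' ∈ Finset.univ) =>
      mul_le_mul_of_nonneg_left (hV s') (hP0 s₀ a₀ s')
    simp_rw [mul_add] at h1
    rw [Finset.sum_add_distrib, ← Finset.sum_mul, hP1, one_mul] at h1
    have h2 := mul_le_mul_of_nonneg_left h1 hγ0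
    rw [mul_add] at h2
    linarith
  have hm0 : 0 ≤ m := by
    have := himp s₀ a₀
    nlinarith
  intro s a
  linarith [hmin' s a]
end

section
/- (Optimality of the fixed point of soft policy iteration, Theorem 1.) Assume α > 0. Let π* be a policy satisfying π* s a = exp (Q^{π*} s a / α) / ∑_{a'} exp (Q^{π*} s a' / α) for all states s and actions a. Then for every policy π and all (s,a), Q^{π*} s a ≥ Q^π s a; that is, π* is optimal among all policies for the maximum entropy objective. -/
/-!
Fix a state and write `Z = ∑ a, exp (Q a / α)`. By the Gibbs inequality, the soft value
`∑ a, p a * (Q a - α * log (p a))` of a distribution `p` is at most `α * log Z`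
(`soft_value_le`), and the Boltzmann distribution attains this bound (`soft_value_boltzmann`).
Thus `π*` is greedy for its own `Q^{π*}`: its soft value dominates that of any policy `π`.

Let `M` be the maximum of `Q^π - Q^{π*}` over state-action pairs. Comparing the two fixed-point
equations at a maximizer, monotonicity and greediness give `M ≤ γ * M`, so `M ≤ 0` as `γ < 1`.
-/

open Real Filter Topology

/-- One term of the Gibbs inequality. It also holds at `p = 0`, where `log 0 = 0`. -/
lemma mul_log_sub_log_le {p q : ℝ} (hp : 0 ≤ p) (hq : 0 < q) :
    p * (log q - log p) ≤ q - p := by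
  rcases hp.eq_or_lt with rfl | hp
  · simpa using hq.le
  · have h := Real.log_le_sub_one_of_pos (div_pos hq hp)
    rw [Real.log_div hq.ne' hp.ne'] at h
    calc p * (log q - log p) ≤ p * (q / p - 1) := mul_le_mul_of_nonneg_left h hp.le
      _ = q - p := by field_simp

lemma log_boltzmann {A : Type*} [Fintype A] [Nonempty A] {α : ℝ} (hα : 0 < α)
    (Q : A → ℝ) (a : A) :
    α * log (exp (Q a / α) / ∑ a', exp (Q a' / α)) =
      Q a - α * log (∑ a', exp (Q a' / α)) := by
  have hZ : 0 < ∑ a', exp (Q a' / α) :=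
    Finset.sum_pos (fun _ _ => exp_pos _) Finset.univ_nonempty
  rw [Real.log_div (exp_pos _).ne' hZ.ne', Real.log_exp]
  field_simp

lemma soft_value_boltzmann {A : Type*} [Fintype A] [Nonempty A] {α : ℝ} (hα : 0 < α)
    (Q q : A → ℝ) (hq1 : ∑ a, q a = 1)
    (hq : ∀ a, q a = exp (Q a / α) / ∑ a', exp (Q a' / α)) :
    ∑ a, q a * (Q a - α * log (q a)) = α * log (∑ a, exp (Q a / α)) := by
  have h : ∀ a, q a * (Q a - α * log (q a)) = q a * (α * log (∑ a, exp (Q a / α))) := by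
    intro a
    have := log_boltzmann hα Q a
    rw [← hq a] at this
    rw [this]
    ring
  rw [Finset.sum_congr rfl fun a _ => h a, ← Finset.sum_mul, hq1, one_mul]

/-- The Gibbs variational inequality: log-sum-exp bounds the soft value of any distribution. -/
lemma soft_value_le {A : Type*} [Fintype A] [Nonempty A] {α : ℝ} (hα : 0 < α)
    (Q p : A → ℝ) (hp0 : ∀ a, 0 ≤ p a) (hp1 : ∑ a, p a = 1) :
    ∑ a, p a * (Q a - α * log (p a)) ≤ α * log (∑ a, exp (Q a / α)) := by
  set Z := ∑ a, exp (Q a / α) with hZdef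
  have hZ : 0 < Z := Finset.sum_pos (fun _ _ => exp_pos _) Finset.univ_nonempty
  have h : ∀ a, p a * (Q a - α * log (p a)) ≤
      α * (exp (Q a / α) / Z - p a) + p a * (α * log Z) := by
    intro a
    have h1 := mul_le_mul_of_nonneg_left
      (mul_log_sub_log_le (hp0 a) (div_pos (exp_pos (Q a / α)) hZ)) hα.le
    have h2 := congrArg (p a * ·) (log_boltzmann hα Q a)
    simp only [← hZdef] at h2
    linarith
  refine (Finset.sum_le_sum fun a _ => h a).trans_eq ?_
  rw [Finset.sum_add_distrib, ← Finset.mul_sum, Finset.sum_sub_distrib, ← Finset.sum_div,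
    ← Finset.sum_mul, hp1, ← hZdef, div_self hZ.ne']
  ring

/-- Optimality of the fixed point of soft policy iteration (Theorem 1): if `π*` is its
own Boltzmann policy with respect to `Q^{π*}`, then `Q^{π*} ≥ Q^π` for every policy `π`. -/
theorem soft_policy_iteration_fixed_point_optimal
    {S A : Type*} [Fintype S] [Fintype A] [Nonempty S] [Nonempty A]
    (P : S → A → S → ℝ) (hP0 : ∀ s a s', 0 ≤ P s a s')
    (hP1 : ∀ s a, ∑ s', P s a s' = 1)
    (R : S → A → ℝ) (γ : ℝ) (hγ0 : 0 ≤ γ) (hγ1 : γ < 1) (α : ℝ) (hα : 0 < α)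
    (polstar : S → A → ℝ) (hstar0 : ∀ s a, 0 ≤ polstar s a)
    (hstar1 : ∀ s, ∑ a, polstar s a = 1)
    (Qstar : S → A → ℝ) (hfixstar : softBellman P R γ α polstar Qstar = Qstar)
    (hboltz : ∀ s a, polstar s a =
        Real.exp (Qstar s a / α) / ∑ a', Real.exp (Qstar s a' / α)) :
    ∀ pol : S → A → ℝ, (∀ s a, 0 ≤ pol s a) → (∀ s, ∑ a, pol s a = 1) →
      ∀ Qpi : S → A → ℝ, softBellman P R γ α pol Qpi = Qpi →
        ∀ s a, Qpi s a ≤ Qstar s a := by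
  intro pol hpol0 hpol1 Qpi hfix
  obtain ⟨⟨s₀, a₀⟩, hmax⟩ :=
    Finite.exists_max (fun x : S × A => Qpi x.1 x.2 - Qstar x.1 x.2)
  set M := Qpi s₀ a₀ - Qstar s₀ a₀ with hM
  have hle : ∀ s a, Qpi s a ≤ Qstar s a + M := fun s a => by
    have := hmax (s, a)
    simp only at this
    linarith
  have hval : ∀ s, ∑ a, pol s a * (Qpi s a - α * log (pol s a)) ≤
      ∑ a, polstar s a * (Qstar s a - α * log (polstar s a)) + M := by
    intro s
    rw [soft_value_boltzmann hα (Qstar s) (polstar s) (hstar1 s) (hboltz s)]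
    calc ∑ a, pol s a * (Qpi s a - α * log (pol s a))
        ≤ ∑ a, (pol s a * (Qstar s a - α * log (pol s a)) + pol s a * M) := by
          refine Finset.sum_le_sum fun a _ => ?_
          have := mul_le_mul_of_nonneg_left (hle s a) (hpol0 s a)
          linarith
      _ = ∑ a, pol s a * (Qstar s a - α * log (pol s a)) + M := by
          rw [Finset.sum_add_distrib, ← Finset.sum_mul, hpol1, one_mul]
      _ ≤ _ := by
          have := soft_value_le hα (Qstar s) (pol s) (hpol0 s) (hpol1 s)
          linarith
  have hsum : ∑ s', P s₀ a₀ s' * (∑ a', pol s' a' * (Qpi s' a' - α * log (pol s' a'))) ≤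
      ∑ s', P s₀ a₀ s' *
        (∑ a', polstar s' a' * (Qstar s' a' - α * log (polstar s' a'))) + M := by
    refine (Finset.sum_le_sum fun s' _ =>
      mul_le_mul_of_nonneg_left (hval s') (hP0 s₀ a₀ s')).trans_eq ?_
    simp only [mul_add]
    rw [Finset.sum_add_distrib, ← Finset.sum_mul, hP1, one_mul]
  have hcontr : M ≤ γ * M := by
    have h1 := congrFun (congrFun hfix s₀) a₀
    have h2 := congrFun (congrFun hfixstar s₀) a₀
    simp only [softBellman] at h1 h2
    have h3 := mul_le_mul_of_nonneg_left hsum hγ0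
    linarith
  have hM0 : M ≤ 0 := by nlinarith
  intro s a
  linarith [hle s a]
end
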